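/- Let G be a graph on n vertices with adjacency matrix A and stability number α(G), let k be a real scalar with α(G) < k, and let C > 0 be a real scalar. Then the origin is the unique local minimizer of the quadratic form q_{A,k}(x) := x^T (kA + kI - J) x over the polytope {x ∈ ℝ^n : x ≥ 0, Σ_{i=1}^n x_i ≤ C}. -/

import Mathlib

open Matrix
open scoped RealInnerProductSpace

/-- The stability (independence) number of a graph: the size of the largest set of
pairwise non-adjacent vertices. -/
noncomputable def stabilityNumber {V : Type*} (G : SimpleGraph V) : ℕ :=
  sSup {k | ∃ s : Finset V, s.card = k ∧ ∀ i ∈ s, ∀ j ∈ s, i ≠ j → ¬ G.Adj i j}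

/-- The matrix `M_{A,k} = k A + k I - J`, where `J` is the all-ones matrix. -/
noncomputable def MAk {n : ℕ} (A : Matrix (Fin n) (Fin n) ℝ) (k : ℝ) : Matrix (Fin n) (Fin n) ℝ :=
  k • A + k • (1 : Matrix (Fin n) (Fin n) ℝ) - Matrix.of (fun _ _ => (1 : ℝ))

/-- Entrywise square of a vector. -/
def vsq {n : ℕ} (x : Fin n → ℝ) : Fin n → ℝ := fun i => (x i) ^ 2

/-- A symmetric matrix `M` is copositive if `xᵀ M x ≥ 0` for all entrywise nonnegative `x`. -/
def Copositive {n : ℕ} (M : Matrix (Fin n) (Fin n) ℝ) : Prop :=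
  ∀ x : Fin n → ℝ, (∀ i, 0 ≤ x i) → 0 ≤ x ⬝ᵥ M.mulVec x

/-- The quartic form `p_M(x) = (x²)ᵀ M (x²)`. -/
noncomputable def quarticForm {n : ℕ} (M : Matrix (Fin n) (Fin n) ℝ) :
    EuclideanSpace ℝ (Fin n) → ℝ :=
  fun x => vsq x ⬝ᵥ M.mulVec (vsq x)

/-- The quadratic form `q_M(x) = xᵀ M x`. -/
noncomputable def quadForm {n : ℕ} (M : Matrix (Fin n) (Fin n) ℝ) :
    EuclideanSpace ℝ (Fin n) → ℝ :=
  fun x => x ⬝ᵥ M.mulVec x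

/-- `xm` is a local minimizer of `f` over `Ω`: `xm ∈ Ω` and there is `ε > 0` such that
`f xm ≤ f x` for all `x ∈ Ω` with `‖x - xm‖ ≤ ε` (Euclidean norm). -/
def IsLocalMinimizer {n : ℕ} (f : EuclideanSpace ℝ (Fin n) → ℝ)
    (Ω : Set (EuclideanSpace ℝ (Fin n))) (xm : EuclideanSpace ℝ (Fin n)) : Prop :=
  xm ∈ Ω ∧ ∃ ε > 0, ∀ x ∈ Ω, ‖x - xm‖ ≤ ε → f xm ≤ f x

/-- `xm` is a strict local minimizer of `f` over `Ω`: `xm ∈ Ω` and there is `ε > 0` such that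
`f xm < f x` for all `x ∈ Ω` with `x ≠ xm` and `‖x - xm‖ ≤ ε` (Euclidean norm). -/
def IsStrictLocalMinimizer {n : ℕ} (f : EuclideanSpace ℝ (Fin n) → ℝ)
    (Ω : Set (EuclideanSpace ℝ (Fin n))) (xm : EuclideanSpace ℝ (Fin n)) : Prop :=
  xm ∈ Ω ∧ ∃ ε > 0, ∀ x ∈ Ω, x ≠ xm → ‖x - xm‖ ≤ ε → f xm < f x

lemma stab_card_le {n : ℕ} (G : SimpleGraph (Fin n)) (s : Finset (Fin n))
    (hs : ∀ i ∈ s, ∀ j ∈ s, i ≠ j → ¬ G.Adj i j) : s.card ≤ stabilityNumber G := by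
  apply le_csSup
  · refine ⟨n, ?_⟩
    rintro m ⟨t, rfl, -⟩
    simpa using t.card_le_univ
  · exact ⟨s, rfl, hs⟩

lemma quad_shift {n : ℕ} (B : Matrix (Fin n) (Fin n) ℝ) (hB : Bᵀ = B) (x : Fin n → ℝ)
    (i j : Fin n) (t : ℝ) (h : B i i + B j j - 2 * B i j = 0) :
    (x + t • (Pi.single i 1 - Pi.single j 1)) ⬝ᵥ
      B *ᵥ (x + t • (Pi.single i 1 - Pi.single j 1)) =
    x ⬝ᵥ B *ᵥ x + 2 * t * ((B *ᵥ x) i - (B *ᵥ x) j) := by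
  have hs : ∀ d : Fin n → ℝ, x ⬝ᵥ B *ᵥ d = d ⬝ᵥ B *ᵥ x := by
    intro d
    rw [dotProduct_mulVec, ← mulVec_transpose, hB, dotProduct_comm]
  have hij : B j i = B i j := by
    conv_lhs => rw [← hB]
    rfl
  rw [mulVec_add, add_dotProduct, dotProduct_add, dotProduct_add]
  have h2 : (Pi.single i (1:ℝ) - Pi.single j 1) ⬝ᵥ B *ᵥ (Pi.single i (1:ℝ) - Pi.single j 1) = 0 := by
    simp only [sub_dotProduct, mulVec_sub, single_dotProduct, Pi.sub_apply, mulVec_single]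
    simp [hij]
    linarith
  simp only [mulVec_smul, smul_dotProduct, dotProduct_smul, h2, hs]
  simp only [sub_dotProduct, single_dotProduct, smul_eq_mul]
  ring

lemma motzkin {n : ℕ} (G : SimpleGraph (Fin n)) [DecidableRel G.Adj] (m : ℕ) :
    ∀ x : Fin n → ℝ, (∀ i, 0 ≤ x i) → (Finset.univ.filter (fun i => x i ≠ 0)).card = m →
    (∑ i, x i) ^ 2 ≤ stabilityNumber G * (x ⬝ᵥ (G.adjMatrix ℝ + 1) *ᵥ x) := by
  induction m using Nat.strong_induction_on with
  | _ m ih =>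
  intro x hx hm
  set B : Matrix (Fin n) (Fin n) ℝ := G.adjMatrix ℝ + 1 with hBdef
  have hB : Bᵀ = B := by simp [hBdef]
  by_cases hst : ∀ i ∈ Finset.univ.filter (fun i => x i ≠ 0),
      ∀ j ∈ Finset.univ.filter (fun i => x i ≠ 0), i ≠ j → ¬ G.Adj i j
  · have hc := stab_card_le G _ hst
    have h1 : (∑ i, x i) = ∑ i ∈ Finset.univ.filter (fun i => x i ≠ 0), x i :=
      (Finset.sum_filter_ne_zero _).symm
    have h2 : x ⬝ᵥ B *ᵥ x ≥ ∑ i ∈ Finset.univ.filter (fun i => x i ≠ 0), x i ^ 2 := by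
      rw [hBdef, add_mulVec, one_mulVec, dotProduct_add]
      have h3 : 0 ≤ x ⬝ᵥ G.adjMatrix ℝ *ᵥ x := by
        apply Finset.sum_nonneg
        intro i _
        apply mul_nonneg (hx i)
        rw [mulVec, dotProduct]
        apply Finset.sum_nonneg
        intro j _
        apply mul_nonneg _ (hx j)
        rw [SimpleGraph.adjMatrix_apply]
        split_ifs <;> norm_num
      have h4 : ∑ i ∈ Finset.univ.filter (fun i => x i ≠ 0), x i ^ 2 ≤ x ⬝ᵥ x := by
        simp only [dotProduct, ← pow_two]
        exact Finset.sum_le_sum_of_subset_of_nonneg (Finset.filter_subset _ _)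
          (fun i _ _ => sq_nonneg _)
      linarith
    rw [h1]
    refine (sq_sum_le_card_mul_sum_sq).trans ?_
    apply mul_le_mul (by exact_mod_cast hc) h2 (Finset.sum_nonneg fun i _ => sq_nonneg _)
      (Nat.cast_nonneg _)
  · push Not at hst
    have key : ∃ i j, x i ≠ 0 ∧ x j ≠ 0 ∧ i ≠ j ∧ G.Adj i j ∧ (B *ᵥ x) i ≤ (B *ᵥ x) j := by
      obtain ⟨i, hi, j, hj, hne, hadj⟩ := hst
      rw [Finset.mem_filter] at hi hj
      rcases le_total ((B *ᵥ x) i) ((B *ᵥ x) j) with h | h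
      · exact ⟨i, j, hi.2, hj.2, hne, hadj, h⟩
      · exact ⟨j, i, hj.2, hi.2, hne.symm, hadj.symm, h⟩
    obtain ⟨i, j, hi, hj, hne, hadj, hle⟩ := key
    have hq := quad_shift B hB x i j (x j) (by
      simp [hBdef, hadj, Matrix.one_apply, hne]; norm_num)
    set y : Fin n → ℝ := x + x j • (Pi.single i 1 - Pi.single j 1) with hy
    have hyj : y j = 0 := by simp [hy, hne.symm]
    have hyi : y i = x i + x j := by simp [hy, hne]
    have hyo : ∀ l, l ≠ i → l ≠ j → y l = x l := by
      intro l h1 h2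
      simp [hy, h1, h2]
    have hy0 : ∀ l, 0 ≤ y l := by
      intro l
      by_cases h1 : l = j
      · rw [h1, hyj]
      by_cases h2 : l = i
      · rw [h2, hyi]; exact add_nonneg (hx i) (hx j)
      · rw [hyo l h2 h1]; exact hx l
    have hsum : ∑ l, y l = ∑ l, x l := by
      simp [hy, Finset.sum_add_distrib, ← Finset.mul_sum]
    have hcard : (Finset.univ.filter (fun i => y i ≠ 0)).card < m := by
      rw [← hm]
      apply Finset.card_lt_card
      rw [Finset.ssubset_iff_of_subset]
      · exact ⟨j, by simp [hj], by simp [hyj]⟩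
      · intro l hl
        simp only [Finset.mem_filter, Finset.mem_univ, true_and] at hl ⊢
        by_cases h1 : l = j
        · rw [h1]; exact hj
        by_cases h2 : l = i
        · rw [h2]; exact hi
        · rwa [← hyo l h2 h1]
    have := ih _ hcard y hy0 rfl
    rw [hsum] at this
    refine this.trans (mul_le_mul_of_nonneg_left ?_ (Nat.cast_nonneg _))
    rw [hq]
    nlinarith [mul_nonneg (hx j) (sub_nonneg.2 hle)]

lemma quad_pos {n : ℕ} (G : SimpleGraph (Fin n)) [DecidableRel G.Adj]
    (k : ℝ) (hk : (stabilityNumber G : ℝ) < k) (x : EuclideanSpace ℝ (Fin n))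
    (hx : ∀ i, 0 ≤ x i) (hne : x ≠ 0) : 0 < quadForm (MAk (G.adjMatrix ℝ) k) x := by
  have h := motzkin G _ x hx rfl
  have hs : 0 < ∑ i, x i := by
    refine lt_of_le_of_ne (Finset.sum_nonneg fun i _ => hx i) fun h0 => hne ?_
    ext i
    exact (Finset.sum_eq_zero_iff_of_nonneg (fun i _ => hx i)).1 h0.symm i (Finset.mem_univ i)
  have e : quadForm (MAk (G.adjMatrix ℝ) k) x =
      k * (x ⬝ᵥ (G.adjMatrix ℝ + 1) *ᵥ x) - (∑ i, x i) ^ 2 := by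
    have hJ : (x : Fin n → ℝ) ⬝ᵥ (Matrix.of (fun _ _ => (1 : ℝ)) : Matrix (Fin n) (Fin n) ℝ) *ᵥ x
        = (∑ i, x i) ^ 2 := by
      simp [dotProduct, mulVec, ← Finset.sum_mul, pow_two]
    rw [quadForm, MAk, sub_mulVec, dotProduct_sub, hJ, ← smul_add, smul_mulVec,
      dotProduct_smul, smul_eq_mul]
  rw [e]
  set f := (x : Fin n → ℝ) ⬝ᵥ (G.adjMatrix ℝ + 1) *ᵥ x
  have hα : (0:ℝ) ≤ stabilityNumber G := Nat.cast_nonneg _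
  have hf : 0 < f := by
    by_contra hf
    nlinarith [pow_pos hs 2, mul_nonneg hα (neg_nonneg.2 (not_lt.1 hf))]
  nlinarith

/-- If `α(G) < k` and `C > 0`, then the origin is the unique local minimizer of
`q_{A,k}` over the polytope `{x : x ≥ 0, ∑ᵢ xᵢ ≤ C}`. -/
theorem origin_unique_localMinimizer {n : ℕ} (G : SimpleGraph (Fin n)) [DecidableRel G.Adj]
    (k : ℝ) (hk : (stabilityNumber G : ℝ) < k) (C : ℝ) (hC : 0 < C) :
    IsLocalMinimizer (quadForm (MAk (G.adjMatrix ℝ) k))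
        {x : EuclideanSpace ℝ (Fin n) | (∀ i, 0 ≤ x i) ∧ ∑ i, x i ≤ C} 0 ∧
    ∀ xm, IsLocalMinimizer (quadForm (MAk (G.adjMatrix ℝ) k))
        {x : EuclideanSpace ℝ (Fin n) | (∀ i, 0 ≤ x i) ∧ ∑ i, x i ≤ C} xm → xm = 0 := by
  have hpos := quad_pos G k hk
  have h0 : quadForm (MAk (G.adjMatrix ℝ) k) 0 = 0 := by simp [quadForm]
  refine ⟨⟨⟨by simp, by simpa using hC.le⟩, 1, one_pos, fun x hx _ => ?_⟩, ?_⟩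
  · rw [h0]
    by_cases h : x = 0
    · rw [h, h0]
    · exact (hpos x hx.1 h).le
  · rintro xm ⟨⟨hx, hxC⟩, ε, hε, hmin⟩
    by_contra hne
    have hq := hpos xm hx hne
    have hnorm : 0 < ‖xm‖ := norm_pos_iff.2 hne
    set t : ℝ := min (1/2) (ε / ‖xm‖) with ht
    have ht0 : 0 < t := lt_min (by norm_num) (by positivity)
    have ht1 : t ≤ 1/2 := min_le_left _ _
    have ht2 : t * ‖xm‖ ≤ ε := (le_div_iff₀ hnorm).1 (min_le_right _ _)
    have hsum : 0 ≤ ∑ i, xm i := Finset.sum_nonneg fun i _ => hx i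
    have := hmin ((1 - t) • xm) ⟨fun i => ?_, ?_⟩ ?_
    · have e : quadForm (MAk (G.adjMatrix ℝ) k) ((1 - t) • xm) =
          (1 - t) ^ 2 * quadForm (MAk (G.adjMatrix ℝ) k) xm := by
        simp only [quadForm, WithLp.ofLp_smul, mulVec_smul, smul_dotProduct, dotProduct_smul,
          smul_eq_mul]
        ring
      rw [e] at this
      have h3 : (1 - t) ^ 2 < 1 := by nlinarith
      nlinarith
    · simpa using mul_nonneg (by linarith) (hx i)
    · simp only [PiLp.smul_apply, smul_eq_mul, ← Finset.mul_sum]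
      nlinarith
    · have : (1 - t) • xm - xm = -(t • xm) := by module
      rw [this, norm_neg, norm_smul, Real.norm_of_nonneg ht0.le]
      exact ht2
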